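/- arXiv:2509.25880 — 2 statements merged into one kernel-verified Lean document; each statement's English description precedes it below -/
import Mathlib

section
/- Let S and E be nonempty sets and let Ω be a determinable set of functions from E × ℕ to S. If ω, ω' ∈ Ω and t, t' ∈ ℕ satisfy ω*(t) = ω'*(t'), then {ω̃*(t+1) | ω̃ ∈ C(ω, t, Ω)} = {ω̃*(t'+1) | ω̃ ∈ C(ω', t', Ω)}; consequently, the relation assigning to each state profile a ∈ (E → S) of the form a = ω*(t) the set {ω̃*(t+1) | ω̃ ∈ C(ω, t, Ω)} is well-defined (independent of the choice of ω and t representing a). -/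
/-- `star ω t` is the "state profile" ω*(t) : E → S, i.e. `e ↦ ω (e, t)`. -/
def star {E S : Type*} (ω : E × ℕ → S) (t : ℕ) : E → S := fun e => ω (e, t)

/-- The consistency context of `ω` up to `t` inside `Ω`. -/
def CC {E S : Type*} (Ω : Set (E × ℕ → S)) (ω : E × ℕ → S) (t : ℕ) :
    Set (E × ℕ → S) :=
  {ω' | ω' ∈ Ω ∧ ∀ e : E, ∀ t' ≤ t, ω' (e, t') = ω (e, t')}

/-- `Ω` is determinable: whenever `ω*(t) = ω'*(t')` there is a monotone bijection
`τ : t⁺ → t'⁺` such that the restrictions to `t⁺` of the `ωx*` for `ωx ∈ C(ω,t,Ω)`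
coincide with the restrictions to `t'⁺` composed with `τ` of the `ωx*` for
`ωx ∈ C(ω',t',Ω)`. -/
def Determinable {E S : Type*} (Ω : Set (E × ℕ → S)) : Prop :=
  ∀ ω ∈ Ω, ∀ ω' ∈ Ω, ∀ t t' : ℕ, star ω t = star ω' t' →
    ∃ τ : {n : ℕ // t ≤ n} → {n : ℕ // t' ≤ n},
      Monotone τ ∧ Function.Bijective τ ∧
      {f : {n : ℕ // t ≤ n} → E → S | ∃ ωx ∈ CC Ω ω t, f = fun n => star ωx n.val} =
      {f : {n : ℕ // t ≤ n} → E → S |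
        ∃ ωx ∈ CC Ω ω' t', f = (fun n : {n : ℕ // t' ≤ n} => star ωx n.val) ∘ τ}

/-- `A`, the set of all state profiles occurring in `Ω`. -/
def StateSet {E S : Type*} (Ω : Set (E × ℕ → S)) : Set (E → S) :=
  {a | ∃ ω ∈ Ω, ∃ t : ℕ, star ω t = a}

/-- `Ω` has an iterator: there is `i : A → 𝒫(A)` such that for all `ω ∈ Ω` and `t`,
`{ωx*(t+1) | ωx ∈ C(ω,t,Ω)} = i(ω*(t))`. -/
def HasIterator {E S : Type*} (Ω : Set (E × ℕ → S)) : Prop :=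
  ∃ i : StateSet Ω → Set (StateSet Ω),
    ∀ ω (hω : ω ∈ Ω) (t : ℕ),
      {a : E → S | ∃ ωx ∈ CC Ω ω t, star ωx (t + 1) = a} =
        Subtype.val '' i ⟨star ω t, ⟨ω, hω, t, rfl⟩⟩

/-! A monotone bijection between two tails of `ℕ` is an isomorphism of well-orders, and such an
isomorphism is unique; hence it is the translation `t + k ↦ t' + k`. Determinability therefore says
that equal state profiles have the same possible futures, indexed by the time elapsed, and the
possible next states are the values of these futures at elapsed time `1`. -/

section Tail

variable {α : Type*} [Add α] [LinearOrder α] [CanonicallyOrderedAdd α] [AddLeftStrictMono α]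

/-- Left translation by `a` as an order isomorphism onto the tail `a⁺`, used to parametrize the
tail by the time elapsed since `a`. -/
noncomputable def addLeftTailIso (a : α) : α ≃o {x : α // a ≤ x} :=
  StrictMono.orderIsoOfSurjective (fun k => ⟨a + k, le_self_add⟩)
    (fun _ _ hkl => add_lt_add_right hkl a)
    (fun ⟨_, hx⟩ => (exists_add_of_le hx).imp fun _ hk => Subtype.ext hk.symm)

theorem coe_addLeftTailIso (a k : α) : (addLeftTailIso a k : α) = a + k := rfl

theorem apply_addLeftTailIso_of_monotone_of_bijective [WellFoundedLT α] {a b : α}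
    {τ : {x : α // a ≤ x} → {x : α // b ≤ x}} (hmono : Monotone τ) (hbij : Function.Bijective τ)
    (k : α) : τ (addLeftTailIso a k) = addLeftTailIso b k := by
  let e := StrictMono.orderIsoOfSurjective τ (hmono.strictMono_of_injective hbij.1) hbij.2
  have translation_unique : (addLeftTailIso a).trans e = addLeftTailIso b :=
    Subsingleton.elim _ _
  exact DFunLike.congr_fun translation_unique k

end Tail

section Futures

variable {E S : Type*} {Ω : Set (E × ℕ → S)} {ω ω' : E × ℕ → S} {t t' : ℕ}

/-- The possible futures of `ω` from time `t` on: the evolutions of the state profile along the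
elements of the consistency context. They are indexed by the time elapsed since `t`, so that
futures from different times can be compared. -/
def futures (Ω : Set (E × ℕ → S)) (ω : E × ℕ → S) (t : ℕ) : Set (ℕ → E → S) :=
  (fun ωx k => star ωx (t + k)) '' CC Ω ω t

theorem Determinable.futures_eq (hΩ : Determinable Ω) (hω : ω ∈ Ω) (hω' : ω' ∈ Ω)
    (h : star ω t = star ω' t') : futures Ω ω t = futures Ω ω' t' := by
  obtain ⟨τ, hmono, hbij, htails⟩ := hΩ ω hω ω' hω' t t' h
  have htails_image : (fun ωx (n : {n // t ≤ n}) => star ωx n) '' CC Ω ω t =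
      (fun ωx n => star ωx (τ n)) '' CC Ω ω' t' := by
    simpa only [Set.image, Function.comp_def, eq_comm] using htails
  calc futures Ω ω t
      = (· ∘ addLeftTailIso t) '' ((fun ωx (n : {n // t ≤ n}) => star ωx n) '' CC Ω ω t) := by
        simp only [futures, Set.image_image, Function.comp_def, coe_addLeftTailIso]
    _ = (· ∘ addLeftTailIso t) '' ((fun ωx n => star ωx (τ n)) '' CC Ω ω' t') := by
        rw [htails_image]
    _ = futures Ω ω' t' := by
        simp only [futures, Set.image_image, Function.comp_def, coe_addLeftTailIso,
          apply_addLeftTailIso_of_monotone_of_bijective hmono hbij]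

theorem image_eval_one_futures (Ω : Set (E × ℕ → S)) (ω : E × ℕ → S) (t : ℕ) :
    (fun f => f 1) '' futures Ω ω t = {a | ∃ ωx ∈ CC Ω ω t, star ωx (t + 1) = a} :=
  Set.image_image _ _ _

end Futures

theorem determinable_nextStates_welldefined {E S : Type*} [Nonempty E] [Nonempty S]
    (Ω : Set (E × ℕ → S)) (hΩ : Determinable Ω)
    (ω ω' : E × ℕ → S) (hω : ω ∈ Ω) (hω' : ω' ∈ Ω) (t t' : ℕ)
    (h : star ω t = star ω' t') :
    {a : E → S | ∃ ωx ∈ CC Ω ω t, star ωx (t + 1) = a} =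
      {a : E → S | ∃ ωx ∈ CC Ω ω' t', star ωx (t' + 1) = a} := by
  rw [← image_eval_one_futures, ← image_eval_one_futures, hΩ.futures_eq hω hω' h]
end

section
/- Let M = ⟨W, R, V⟩ be a Kripke model and let Q be modal equivalence on W. Then for every world w ∈ W and every modal formula φ: M, w ⊨ ◇φ if and only if there exists a world w'' ∈ W such that there exist a, b ∈ W with a Q w, b Q w'', and a R b, and M, w'' ⊨ φ. -/
/-- Modal formulas over a set `P` of propositional atoms. -/
inductive Formula (P : Type*) where
  | atom : P → Formula P
  | falsum : Formula P
  | impl : Formula P → Formula P → Formula P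
  | box : Formula P → Formula P
  | dia : Formula P → Formula P

/-- Kripke satisfaction `M, w ⊨ φ` for the model with accessibility `R` and
valuation `V`. -/
def Sat {W P : Type*} (R : W → W → Prop) (V : P → Set W) :
    W → Formula P → Prop
  | w, .atom p => w ∈ V p
  | _, .falsum => False
  | w, .impl φ ψ => Sat R V w φ → Sat R V w ψ
  | w, .box φ => ∀ w', R w w' → Sat R V w' φ
  | w, .dia φ => ∃ w', R w w' ∧ Sat R V w' φ

/-- Modal equivalence: two worlds satisfy exactly the same formulas. -/
def ModEq {W P : Type*} (R : W → W → Prop) (V : P → Set W) (w w' : W) : Prop :=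
  ∀ φ : Formula P, Sat R V w φ ↔ Sat R V w' φ

section

variable {W P : Type*} {R : W → W → Prop} {V : P → Set W} {w : W} {φ : Formula P}

theorem sat_dia : Sat R V w (.dia φ) ↔ ∃ w', R w w' ∧ Sat R V w' φ := by
  rw [Sat]

protected theorem ModEq.refl (w : W) : ModEq R V w w := fun _ => Iff.rfl

theorem ModEq.sat_dia_of_rel {a b w' : W} (haw : ModEq R V a w) (hbw' : ModEq R V b w')
    (hab : R a b) (hφ : Sat R V w' φ) : Sat R V w (.dia φ) :=
  have hb : Sat R V b φ := (hbw' φ).mpr hφ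
  have ha : Sat R V a (.dia φ) := sat_dia.mpr ⟨b, hab, hb⟩
  (haw (.dia φ)).mp ha

end

theorem dia_iff_modEq_successors {W P : Type*}
    (R : W → W → Prop) (V : P → Set W) (w : W) (φ : Formula P) :
    Sat R V w (Formula.dia φ) ↔
      ∃ w'' : W, (∃ a b : W, ModEq R V a w ∧ ModEq R V b w'' ∧ R a b) ∧
        Sat R V w'' φ := by
  constructor
  · intro h
    obtain ⟨w', hww', hφ⟩ := sat_dia.mp h
    exact ⟨w', ⟨w, w', .refl w, .refl w', hww'⟩, hφ⟩
  · rintro ⟨w'', ⟨a, b, haw, hbw'', hab⟩, hφ⟩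
    exact haw.sat_dia_of_rel hbw'' hab hφ
end
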